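/- Let π* be an assignment and let δ be a perturbation satisfying δ(a,b) ≤ 0 for every edge (a,b) assigned in π* and δ(a,b) ≥ 0 for every edge (a,b) not assigned in π*. Then f(δ, π*) ≤ f(δ, π) for every assignment π; consequently, if π* is optimal for w, then δ is an allowable perturbation for (w, π*). -/

import Mathlib

open Finset Filter Topology

/-- Cost of an assignment `π : T → A` under weights `w : A × T → ℝ`. -/
noncomputable def cost {A T : Type*} [Fintype T] (w : A × T → ℝ) (π : T → A) : ℝ :=
  ∑ b : T, w (π b, b)

/-- `πs` is an optimal assignment for weights `w`: it is injective (an assignment)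
and minimizes the cost among all assignments. -/
def Optimal {A T : Type*} [Fintype T] (w : A × T → ℝ) (πs : T → A) : Prop :=
  Function.Injective πs ∧ ∀ π : T → A, Function.Injective π → cost w πs ≤ cost w π

/-- `δ` is an allowable perturbation for `(w, πs)`: `πs` remains optimal for `w + δ`. -/
def Allowable {A T : Type*} [Fintype T] (w δ : A × T → ℝ) (πs : T → A) : Prop :=
  Optimal (w + δ) πs

section

variable {A T : Type*} [Fintype T] {w δ : A × T → ℝ} {πs : T → A}

theorem cost_add (w δ : A × T → ℝ) (π : T → A) : cost (w + δ) π = cost w π + cost δ π :=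
  Finset.sum_add_distrib

theorem Optimal.add (hw : Optimal w πs) (hδ : Optimal δ πs) : Optimal (w + δ) πs := by
  refine ⟨hw.1, fun π hπ => ?_⟩
  calc cost (w + δ) πs = cost w πs + cost δ πs := cost_add w δ πs
    _ ≤ cost w π + cost δ π := add_le_add (hw.2 π hπ) (hδ.2 π hπ)
    _ = cost (w + δ) π := (cost_add w δ π).symm

theorem cost_le_cost_of_forall_le (hmin : ∀ a b, w (πs b, b) ≤ w (a, b)) (π : T → A) :
    cost w πs ≤ cost w π :=
  Finset.sum_le_sum fun b _ => hmin (π b) b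

theorem stmt1_general (h1 : ∀ a b, πs b = a → δ (a, b) ≤ 0)
    (h2 : ∀ a b, πs b ≠ a → 0 ≤ δ (a, b)) :
    (∀ π : T → A, cost δ πs ≤ cost δ π) ∧ (Optimal w πs → Allowable w δ πs) := by
  have hmin : ∀ a b, δ (πs b, b) ≤ δ (a, b) := by
    intro a b
    rcases eq_or_ne (πs b) a with rfl | hne
    · exact le_rfl
    · exact (h1 (πs b) b rfl).trans (h2 a b hne)
  have hcost : ∀ π, cost δ πs ≤ cost δ π := cost_le_cost_of_forall_le hmin
  exact ⟨hcost, fun hw => hw.add ⟨hw.1, fun π _ => hcost π⟩⟩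

end

theorem stmt1 {A T : Type*} [Fintype A] [Fintype T] [Nonempty A] [Nonempty T]
    (hAT : Fintype.card T ≤ Fintype.card A)
    (w δ : A × T → ℝ) (πs : T → A)
    (hπs : Function.Injective πs)
    (h1 : ∀ a b, πs b = a → δ (a, b) ≤ 0)
    (h2 : ∀ a b, πs b ≠ a → 0 ≤ δ (a, b)) :
    (∀ π : T → A, Function.Injective π → cost δ πs ≤ cost δ π) ∧
    (Optimal w πs → Allowable w δ πs) :=
  (stmt1_general h1 h2).imp_left fun hcost π _ => hcost π
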